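/- For each n, let X ~ P_{β_1,Q^{CW}} and Y ~ P_{β_2,Q^{CW}} be independent Ising random vectors on {−1,1}^n with the Curie–Weiss interaction matrix Q^{CW} = (1/n)(11ᵀ − I_n), where β_1, β_2 ≥ 0. Then √n · T_n converges in distribution to N(0, (1−m(β_1)²)(1−m(β_2)²)). In particular, the limiting variance equals 1 if and only if β_1 ≤ 1 and β_2 ≤ 1, and is strictly less than 1 otherwise. -/

import Mathlib

open MeasureTheory ProbabilityTheory Filter Topology Matrix

noncomputable section

/-- The `±1` configuration associated to a boolean configuration. -/
def pmVec {ι : Type*} (s : ι → Bool) : ι → ℝ := fun i => if s i then 1 else -1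

/-- Unnormalized Ising weight `exp((β/2) zᵀ Q z)`. -/
def isingWeight {ι : Type*} [Fintype ι] (β : ℝ) (Q : Matrix ι ι ℝ) (z : ι → ℝ) : ℝ :=
  Real.exp (β / 2 * (z ⬝ᵥ Q.mulVec z))

/-- Ising partition function `Z(β,Q)`. -/
def isingZ (ι : Type*) [Fintype ι] [DecidableEq ι] (β : ℝ) (Q : Matrix ι ι ℝ) : ℝ :=
  ∑ s : ι → Bool, isingWeight β Q (pmVec s)

/-- The Ising probability measure `P_{β,Q}` on `{±1}^ι ⊆ ℝ^ι`:
`P(z) = exp((β/2) zᵀQz) / Z(β,Q)`. -/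
def isingMeasure (ι : Type*) [Fintype ι] [DecidableEq ι] (β : ℝ) (Q : Matrix ι ι ℝ) :
    Measure (ι → ℝ) :=
  ∑ s : ι → Bool,
    ENNReal.ofReal (isingWeight β Q (pmVec s) / isingZ ι β Q) • Measure.dirac (pmVec s)

/-- Sample mean `X̄ = (1/n) Σ_i X_i`. -/
def sampleMean {ι : Type*} [Fintype ι] (x : ι → ℝ) : ℝ := (∑ i, x i) / (Fintype.card ι : ℝ)

/-- Sample covariance `T_n = (1/n) Σ_i (X_i - X̄)(Y_i - Ȳ)`. -/
def sampleCov {ι : Type*} [Fintype ι] (x y : ι → ℝ) : ℝ :=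
  (∑ i, (x i - sampleMean x) * (y i - sampleMean y)) / (Fintype.card ι : ℝ)

/-- Convergence in distribution: weak convergence of the laws, tested against
bounded continuous functions. -/
def TendstoInDistribution (μ : ℕ → Measure ℝ) (ν : Measure ℝ) : Prop :=
  ∀ f : BoundedContinuousFunction ℝ ℝ,
    Tendsto (fun n => ∫ x, f x ∂(μ n)) atTop (𝓝 (∫ x, f x ∂ν))

/-- The Curie–Weiss interaction matrix `Q^{CW} = (1/n)(11ᵀ - I)`. -/
def QCW (n : ℕ) : Matrix (Fin n) (Fin n) ℝ := fun i j => if i = j then 0 else (n : ℝ)⁻¹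

/-- `m(β)`: equal to `0` for `β ≤ 1`, and to the unique positive root of
`m = tanh(β m)` for `β > 1`. -/
def isingMag (β : ℝ) : ℝ := sSup {m : ℝ | 0 ≤ m ∧ m = Real.tanh (β * m)}

/-
The Curie–Weiss law is a mixture of product measures: linearizing the square of the magnetization
by a Gaussian integral (Hubbard–Stratonovich), the spins are i.i.d. with mean `tanh θ` given a
random field `θ`. Given `X` and the field of `Y`, `√n Tₙ` is a weighted sum of bounded independent
variables, centred up to a constant that the weights annihilate, so by Lindeberg's replacement its
characteristic function at `t` is close to `exp (-t² / 2 * Tₙ(X, X) (1 - tanh² θ))`, and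
`Tₙ(X, X) = 1 - X̄²`. The field has density proportional to `exp (-n V(θ))` with
`V(θ) = θ² / (2β) - log (2 cosh θ)`; its critical points solve `θ / β = tanh θ`, and every global
minimizer has `tanh² θ = m(β)²`, so by Laplace's method `tanh² θ` concentrates at `m(β)²`. Since
`X̄` is close to `tanh` of the field of `X`, also `X̄²` concentrates at its own limit.
-/

section CharacteristicFunctions

theorem norm_prod_sub_prod_le {ι R : Type*} [NormedCommRing R] [NormOneClass R]
    (s : Finset ι) {f g : ι → R} (hf : ∀ i ∈ s, ‖f i‖ ≤ 1) (hg : ∀ i ∈ s, ‖g i‖ ≤ 1) :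
    ‖∏ i ∈ s, f i - ∏ i ∈ s, g i‖ ≤ ∑ i ∈ s, ‖f i - g i‖ := by
  induction s using Finset.cons_induction with
  | empty => simp
  | cons a s ha ih =>
    rw [Finset.forall_mem_cons] at hf hg
    have hprod : ‖∏ i ∈ s, f i‖ ≤ 1 :=
      (s.norm_prod_le f).trans (Finset.prod_le_one (fun _ _ => norm_nonneg _) hf.2)
    rw [Finset.prod_cons, Finset.prod_cons, Finset.sum_cons]
    calc ‖f a * ∏ i ∈ s, f i - g a * ∏ i ∈ s, g i‖
        = ‖(f a - g a) * ∏ i ∈ s, f i + g a * (∏ i ∈ s, f i - ∏ i ∈ s, g i)‖ := by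
          congr 1; ring
      _ ≤ ‖f a - g a‖ * ‖∏ i ∈ s, f i‖ + ‖g a‖ * ‖∏ i ∈ s, f i - ∏ i ∈ s, g i‖ :=
          (norm_add_le _ _).trans (add_le_add (norm_mul_le _ _) (norm_mul_le _ _))
      _ ≤ ‖f a - g a‖ * 1 + 1 * ∑ i ∈ s, ‖f i - g i‖ := by
          gcongr
          · exact hg.1
          · exact ih hf.2 hg.2
      _ = ‖f a - g a‖ + ∑ i ∈ s, ‖f i - g i‖ := by ring

theorem abs_exp_neg_sub_exp_neg_le {x y : ℝ} (hx : 0 ≤ x) (hy : 0 ≤ y) :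
    |Real.exp (-x) - Real.exp (-y)| ≤ |x - y| := by
  wlog hxy : x ≤ y generalizing x y
  · rw [abs_sub_comm, abs_sub_comm x]
    exact this hy hx (le_of_not_ge hxy)
  have hle : Real.exp (-y) ≤ Real.exp (-x) := Real.exp_le_exp.2 (neg_le_neg hxy)
  rw [abs_of_nonneg (sub_nonneg.2 hle), abs_sub_comm, abs_of_nonneg (sub_nonneg.2 hxy)]
  calc Real.exp (-x) - Real.exp (-y)
      = Real.exp (-x) * (1 - Real.exp (-(y - x))) := by
        rw [mul_sub, mul_one, ← Real.exp_add]; ring_nf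
    _ ≤ 1 * (y - x) := by
        refine mul_le_mul (Real.exp_le_one_iff.2 (by linarith)) ?_ ?_ zero_le_one
        · linarith [Real.add_one_le_exp (-(y - x))]
        · exact sub_nonneg.2 (Real.exp_le_one_iff.2 (by linarith))
    _ = y - x := one_mul _

theorem exp_neg_le_quadratic {w : ℝ} (hw : 0 ≤ w) : Real.exp (-w) ≤ 1 - w + w ^ 2 / 2 := by
  rw [Real.exp_neg, inv_le_iff_one_le_mul₀ (Real.exp_pos w)]
  calc (1 : ℝ) ≤ (1 - w + w ^ 2 / 2) * (1 + w + w ^ 2 / 2) := by nlinarith [sq_nonneg (w ^ 2)]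
    _ ≤ (1 - w + w ^ 2 / 2) * Real.exp w :=
        mul_le_mul_of_nonneg_left (Real.quadratic_le_exp_of_nonneg hw)
          (by nlinarith [sq_nonneg (w - 1)])

theorem norm_cexp_mul_I_sub_quadratic_le {x r : ℝ} (hx : |x| ≤ r) :
    ‖Complex.exp (x * Complex.I) - ((1 - x ^ 2 / 2 : ℝ) + x * Complex.I)‖
      ≤ r ^ 3 * Real.exp r := by
  have hsum : ∑ m ∈ Finset.range 3, (x * Complex.I) ^ m / (m.factorial : ℂ)
      = (1 - x ^ 2 / 2 : ℝ) + x * Complex.I := by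
    simp [Finset.sum_range_succ, Nat.factorial, mul_pow, Complex.I_sq]
    ring
  have hnorm : ‖x * Complex.I‖ = |x| := by simp
  have hr : 0 ≤ r := (abs_nonneg x).trans hx
  calc ‖Complex.exp (x * Complex.I) - ((1 - x ^ 2 / 2 : ℝ) + x * Complex.I)‖
      ≤ |x| ^ 3 * Real.exp |x| := by
        rw [← hsum, ← hnorm]
        exact Complex.norm_exp_sub_sum_le_norm_mul_exp _ 3
    _ ≤ r ^ 3 * Real.exp r := by gcongr

theorem norm_integral_cexp_mul_I_le_one {Ω : Type*} [MeasurableSpace Ω] {μ : Measure Ω}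
    [IsProbabilityMeasure μ] (Z : Ω → ℝ) : ‖∫ ω, Complex.exp (Z ω * Complex.I) ∂μ‖ ≤ 1 := by
  simpa using norm_integral_le_of_norm_le_const (μ := μ) (C := 1)
    (.of_forall fun ω => (Complex.norm_exp_ofReal_mul_I (Z ω)).le)

theorem norm_integral_cexp_mul_I_sub_variance_le {Ω : Type*} [MeasurableSpace Ω]
    {μ : Measure Ω} [IsProbabilityMeasure μ] {Z : Ω → ℝ} {r : ℝ} (hZ : Measurable Z)
    (hZ_mean : ∫ ω, Z ω ∂μ = 0) (hZr : ∀ ω, |Z ω| ≤ r) :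
    ‖∫ ω, Complex.exp (Z ω * Complex.I) ∂μ - (1 - Var[Z; μ] / 2 : ℝ)‖ ≤ r ^ 3 * Real.exp r := by
  have hZ_int : Integrable Z μ := .of_bound hZ.aestronglyMeasurable r (.of_forall hZr)
  have hZ_sq_int : Integrable (fun ω => Z ω ^ 2) μ :=
    (MemLp.of_bound hZ.aestronglyMeasurable r (.of_forall hZr)).integrable_sq
  have hre_int : Integrable (fun ω => ((1 - Z ω ^ 2 / 2 : ℝ) : ℂ)) μ :=
    ((integrable_const 1).sub (hZ_sq_int.div_const 2)).ofReal
  have him_int : Integrable (fun ω => Z ω * Complex.I) μ := hZ_int.ofReal.mul_const _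
  have hexp_int : Integrable (fun ω => Complex.exp (Z ω * Complex.I)) μ :=
    .of_bound (by fun_prop) 1 (.of_forall fun ω => (Complex.norm_exp_ofReal_mul_I _).le)
  have hquad : ∫ ω, ((1 - Z ω ^ 2 / 2 : ℝ) + Z ω * Complex.I) ∂μ = (1 - Var[Z; μ] / 2 : ℝ) := by
    rw [integral_add hre_int him_int, integral_complex_ofReal, integral_mul_const,
      integral_complex_ofReal,
      integral_sub (integrable_const 1) (hZ_sq_int.div_const 2), integral_div, hZ_mean,
      variance_of_integral_eq_zero hZ.aemeasurable hZ_mean]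
    simp
  rw [← hquad, ← integral_sub (g := fun ω => ((1 - Z ω ^ 2 / 2 : ℝ) + Z ω * Complex.I)) hexp_int
    (hre_int.add him_int)]
  simpa using norm_integral_le_of_norm_le_const (μ := μ)
    (.of_forall fun ω => norm_cexp_mul_I_sub_quadratic_le (hZr ω))

theorem norm_integral_cexp_mul_I_sub_exp_variance_le {Ω : Type*} [MeasurableSpace Ω]
    {μ : Measure Ω} [IsProbabilityMeasure μ] {Z : Ω → ℝ} {r : ℝ} (hZ : Measurable Z)
    (hZ_mean : ∫ ω, Z ω ∂μ = 0) (hZr : ∀ ω, |Z ω| ≤ r) :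
    ‖∫ ω, Complex.exp (Z ω * Complex.I) ∂μ - (Real.exp (-(Var[Z; μ] / 2)) : ℂ)‖
      ≤ 2 * r ^ 3 * Real.exp r := by
  obtain ⟨ω₀⟩ := μ.nonempty_of_neZero
  have hr : 0 ≤ r := (abs_nonneg _).trans (hZr ω₀)
  have hvar_nonneg : 0 ≤ Var[Z; μ] / 2 := by linarith [variance_nonneg Z μ]
  have hvar_le : Var[Z; μ] ≤ r ^ 2 := by
    simpa using variance_le_sq_of_bounded (.of_forall fun ω => abs_le.1 (hZr ω)) hZ.aemeasurable
  have hexp : ‖((1 - Var[Z; μ] / 2 : ℝ) : ℂ) - (Real.exp (-(Var[Z; μ] / 2)) : ℂ)‖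
      ≤ r ^ 3 * Real.exp r := by
    rw [← Complex.ofReal_sub, Complex.norm_real, Real.norm_eq_abs, abs_sub_comm, abs_of_nonneg
      (by linarith [Real.add_one_le_exp (-(Var[Z; μ] / 2))])]
    calc Real.exp (-(Var[Z; μ] / 2)) - (1 - Var[Z; μ] / 2)
        ≤ (Var[Z; μ] / 2) ^ 2 / 2 := by linarith [exp_neg_le_quadratic hvar_nonneg]
      _ ≤ (r ^ 2 / 2) ^ 2 / 2 := by gcongr
      _ ≤ r ^ 3 * r := by nlinarith [pow_nonneg hr 4]
      _ ≤ r ^ 3 * Real.exp r := by gcongr; linarith [Real.add_one_le_exp r]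
  linarith [norm_integral_cexp_mul_I_sub_variance_le hZ hZ_mean hZr, hexp,
    norm_sub_le_norm_sub_add_norm_sub (∫ ω, Complex.exp (Z ω * Complex.I) ∂μ)
      ((1 - Var[Z; μ] / 2 : ℝ) : ℂ) (Real.exp (-(Var[Z; μ] / 2)) : ℂ)]

/- Lindeberg's replacement, one factor of the characteristic function at a time. -/
theorem norm_integral_pi_cexp_sum_mul_I_sub_exp_variance_le {ι : Type*} [Fintype ι]
    {Ω : ι → Type*} [∀ i, MeasurableSpace (Ω i)] {μ : ∀ i, Measure (Ω i)}
    [∀ i, IsProbabilityMeasure (μ i)] {Z : ∀ i, Ω i → ℝ} {r : ℝ} (hZ : ∀ i, Measurable (Z i))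
    (hZ_mean : ∀ i, ∫ ω, Z i ω ∂μ i = 0) (hZr : ∀ i ω, |Z i ω| ≤ r) :
    ‖∫ ω, Complex.exp ((∑ i, Z i (ω i) : ℝ) * Complex.I) ∂Measure.pi μ
        - (Real.exp (-((∑ i, Var[Z i; μ i]) / 2)) : ℂ)‖
      ≤ Fintype.card ι * (2 * r ^ 3 * Real.exp r) := by
  have hleft : ∫ ω, Complex.exp ((∑ i, Z i (ω i) : ℝ) * Complex.I) ∂Measure.pi μ
      = ∏ i, ∫ ω, Complex.exp (Z i ω * Complex.I) ∂μ i := by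
    rw [← integral_fintype_prod_eq_prod]
    simp only [Complex.ofReal_sum, Finset.sum_mul, Complex.exp_sum]
  have hright : (Real.exp (-((∑ i, Var[Z i; μ i]) / 2)) : ℂ)
      = ∏ i, (Real.exp (-(Var[Z i; μ i] / 2)) : ℂ) := by
    rw [Finset.sum_div, ← Finset.sum_neg_distrib, Real.exp_sum, Complex.ofReal_prod]
  rw [hleft, hright]
  calc _ ≤ ∑ i, ‖∫ ω, Complex.exp (Z i ω * Complex.I) ∂μ i
            - (Real.exp (-(Var[Z i; μ i] / 2)) : ℂ)‖ := by
        refine norm_prod_sub_prod_le _ (fun i _ => norm_integral_cexp_mul_I_le_one _)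
          fun i _ => ?_
        rw [Complex.norm_real, Real.norm_of_nonneg (Real.exp_nonneg _), Real.exp_le_one_iff]
        linarith [variance_nonneg (Z i) (μ i)]
    _ ≤ ∑ _i : ι, 2 * r ^ 3 * Real.exp r := by
        gcongr with i
        exact norm_integral_cexp_mul_I_sub_exp_variance_le (hZ i) (hZ_mean i) (hZr i)
    _ = Fintype.card ι * (2 * r ^ 3 * Real.exp r) := by simp

end CharacteristicFunctions

section SampleCovariance

variable {ι : Type*} [Fintype ι]

theorem sum_sub_sampleMean (x : ι → ℝ) : ∑ i, (x i - sampleMean x) = 0 := by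
  cases isEmpty_or_nonempty ι
  · simp
  · simp [sampleMean, Finset.sum_sub_distrib]
    field_simp
    ring

theorem sampleCov_eq_sum_mul_sub (x y : ι → ℝ) (c : ℝ) :
    sampleCov x y = (∑ i, (x i - sampleMean x) * (y i - c)) / Fintype.card ι := by
  have hsplit (i : ι) : (x i - sampleMean x) * (y i - sampleMean y)
      = (x i - sampleMean x) * (y i - c) + (x i - sampleMean x) * (c - sampleMean y) := by ring
  rw [sampleCov, Finset.sum_congr rfl fun i _ => hsplit i, Finset.sum_add_distrib,
    ← Finset.sum_mul, sum_sub_sampleMean, zero_mul, add_zero]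

theorem sampleCov_self (x : ι → ℝ) :
    sampleCov x x = (∑ i, x i ^ 2) / Fintype.card ι - sampleMean x ^ 2 := by
  simp only [sampleCov_eq_sum_mul_sub x x 0, sub_zero, sub_mul, ← pow_two,
    Finset.sum_sub_distrib, ← Finset.mul_sum]
  simp only [sampleMean]
  ring

theorem sampleCov_self_nonneg (x : ι → ℝ) : 0 ≤ sampleCov x x :=
  div_nonneg (Finset.sum_nonneg fun _ _ => mul_self_nonneg _) (Nat.cast_nonneg _)

theorem sampleCov_self_le_one {x : ι → ℝ} (hx : ∀ i, |x i| ≤ 1) : sampleCov x x ≤ 1 := by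
  have hsum : ∑ i, x i ^ 2 ≤ Fintype.card ι := by
    simpa using Finset.sum_le_card_nsmul Finset.univ (fun i => x i ^ 2) 1 fun i _ =>
      (sq_le_one_iff_abs_le_one _).2 (hx i)
  rw [sampleCov_self]
  linarith [div_le_one_of_le₀ hsum (Nat.cast_nonneg _), sq_nonneg (sampleMean x)]

theorem abs_sampleMean_le {x : ι → ℝ} {c : ℝ} (hc : 0 ≤ c) (hx : ∀ i, |x i| ≤ c) :
    |sampleMean x| ≤ c := by
  rw [sampleMean, abs_div, Nat.abs_cast]
  refine div_le_of_le_mul₀ (Nat.cast_nonneg _) hc ?_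
  calc |∑ i, x i| ≤ ∑ i, |x i| := Finset.abs_sum_le_sum_abs _ _
    _ ≤ ∑ _i : ι, c := Finset.sum_le_sum fun i _ => hx i
    _ = c * Fintype.card ι := by simp [mul_comm]

theorem continuous_sampleCov :
    Continuous fun p : (ι → ℝ) × (ι → ℝ) => sampleCov p.1 p.2 := by
  unfold sampleCov sampleMean
  fun_prop

theorem norm_integral_pi_cexp_weightedSum_sub_le {Ω : Type*} [MeasurableSpace Ω]
    {ν : Measure Ω} [IsProbabilityMeasure ν] {Y : Ω → ℝ} (hY : Measurable Y)
    (hY_le : ∀ ω, |Y ω| ≤ 1) {w : ι → ℝ} {r : ℝ} (hw : ∀ i, |w i| ≤ r) :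
    ‖∫ ω, Complex.exp ((∑ i, w i * (Y (ω i) - ∫ η, Y η ∂ν) : ℝ) * Complex.I)
          ∂Measure.pi (fun _ => ν)
        - (Real.exp (-((∑ i, w i ^ 2) * Var[Y; ν] / 2)) : ℂ)‖
      ≤ Fintype.card ι * (2 * (r * 2) ^ 3 * Real.exp (r * 2)) := by
  have hY_int : Integrable Y ν := .of_bound hY.aestronglyMeasurable 1 (.of_forall hY_le)
  have hY_mean : |∫ η, Y η ∂ν| ≤ 1 := by
    simpa using norm_integral_le_of_norm_le_const (μ := ν) (f := Y) (.of_forall hY_le)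
  have hcentre (i : ι) : ∫ ω, w i * (Y ω - ∫ η, Y η ∂ν) ∂ν = 0 := by
    simp [integral_const_mul, integral_sub hY_int (integrable_const _)]
  have hbound (i : ι) (ω : Ω) : |w i * (Y ω - ∫ η, Y η ∂ν)| ≤ r * 2 := by
    rw [abs_mul]
    exact mul_le_mul (hw i) (by linarith [abs_sub (Y ω) (∫ η, Y η ∂ν), hY_le ω]) (abs_nonneg _)
      ((abs_nonneg _).trans (hw i))
  have hclt := norm_integral_pi_cexp_sum_mul_I_sub_exp_variance_le (μ := fun _ : ι => ν)
    (fun i => (hY.sub_const _).const_mul (w i)) hcentre hbound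
  simpa only [variance_const_mul, variance_sub_const hY.aestronglyMeasurable, ← Finset.sum_mul]
    using hclt

theorem norm_integral_pi_cexp_sampleCov_sub_le [Nonempty ι] {Ω : Type*} [MeasurableSpace Ω]
    {ν : Measure Ω} [IsProbabilityMeasure ν] {Y : Ω → ℝ} (hY : Measurable Y)
    (hY_le : ∀ ω, |Y ω| ≤ 1) {x : ι → ℝ} (hx : ∀ i, |x i| ≤ 1) (t : ℝ) :
    ‖∫ ω, Complex.exp ((t * (√(Fintype.card ι) * sampleCov x fun i => Y (ω i)) : ℝ) * Complex.I)
          ∂Measure.pi (fun _ => ν)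
        - (Real.exp (-(t ^ 2 / 2 * (sampleCov x x * Var[Y; ν]))) : ℂ)‖
      ≤ 128 * |t| ^ 3 * Real.exp (4 * |t|) / √(Fintype.card ι) := by
  set a := √(Fintype.card ι) with ha
  have ha1 : 1 ≤ a := Real.one_le_sqrt.2 (Nat.one_le_cast.2 Fintype.card_pos)
  have ha_sq : (Fintype.card ι : ℝ) = a ^ 2 := (Real.sq_sqrt (Nat.cast_nonneg _)).symm
  clear_value a
  have hw (i : ι) : |t / a * (x i - sampleMean x)| ≤ |t| / a * 2 := by
    rw [abs_mul, abs_div, abs_of_pos (zero_lt_one.trans_le ha1)]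
    gcongr
    linarith [abs_sub (x i) (sampleMean x), hx i, abs_sampleMean_le zero_le_one hx]
  have hsum (ω : ι → Ω) : t * (a * sampleCov x fun i => Y (ω i))
      = ∑ i, t / a * (x i - sampleMean x) * (Y (ω i) - ∫ η, Y η ∂ν) := by
    simp only [sampleCov_eq_sum_mul_sub x _ (∫ η, Y η ∂ν), ha_sq, mul_assoc, ← Finset.mul_sum]
    field_simp
  have hvar : t ^ 2 / 2 * (sampleCov x x * Var[Y; ν])
      = (∑ i, (t / a * (x i - sampleMean x)) ^ 2) * Var[Y; ν] / 2 := by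
    simp only [sampleCov, ha_sq, mul_pow, ← Finset.mul_sum, ← pow_two]
    ring
  simp only [hsum, hvar]
  calc _ ≤ Fintype.card ι * (2 * (|t| / a * 2 * 2) ^ 3 * Real.exp (|t| / a * 2 * 2)) :=
        norm_integral_pi_cexp_weightedSum_sub_le hY hY_le hw
    _ = 128 * |t| ^ 3 * Real.exp (4 * (|t| / a)) / a := by
        rw [ha_sq]; field_simp; ring_nf
    _ ≤ 128 * |t| ^ 3 * Real.exp (4 * |t|) / a := by
        gcongr
        exact div_le_self (abs_nonneg t) ha1

section SampleMean

variable {Ω : Type*} [MeasurableSpace Ω] {ν : Measure Ω} [IsProbabilityMeasure ν] {Y : Ω → ℝ}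

theorem integral_pi_sampleMean [Nonempty ι] (hY : Integrable Y ν) :
    ∫ ω, sampleMean (fun i => Y (ω i)) ∂Measure.pi (fun _ : ι => ν) = ∫ η, Y η ∂ν := by
  have hcoord (i : ι) : ∫ ω, Y (ω i) ∂Measure.pi (fun _ : ι => ν) = ∫ η, Y η ∂ν :=
    integral_comp_eval hY.aestronglyMeasurable
  simp only [sampleMean, integral_div]
  rw [integral_finsetSum _ fun i _ => integrable_comp_eval hY]
  simp [hcoord]

theorem variance_pi_sampleMean (hY : MemLp Y 2 ν) :
    Var[fun ω => sampleMean fun i => Y (ω i); Measure.pi (fun _ : ι => ν)]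
      = Var[Y; ν] / Fintype.card ι := by
  have hsum := variance_sum_pi (μ := fun _ : ι => ν) (X := fun _ => Y) fun _ => hY
  simp only [sampleMean, div_eq_inv_mul, variance_const_mul]
  rw [← Finset.sum_fn, hsum]
  simp
  field_simp

theorem integral_abs_sq_sub_sq_integral_le (hY : Measurable Y) (hY_le : ∀ ω, |Y ω| ≤ 1)
    {a : ℝ} (ha : 0 < a) :
    ∫ ω, |Y ω ^ 2 - (∫ η, Y η ∂ν) ^ 2| ∂ν ≤ a * Var[Y; ν] + 1 / a := by
  have hY_mean : |∫ η, Y η ∂ν| ≤ 1 := by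
    simpa using norm_integral_le_of_norm_le_const (μ := ν) (f := Y) (.of_forall hY_le)
  have hY_mem : MemLp Y 2 ν := .of_bound hY.aestronglyMeasurable 1 (.of_forall hY_le)
  have hint : Integrable (fun ω => (Y ω - ∫ η, Y η ∂ν) ^ 2) ν :=
    (hY_mem.sub (memLp_const _)).integrable_sq
  rw [variance_eq_integral hY.aemeasurable]
  set m := ∫ η, Y η ∂ν
  have hpoint (ω : Ω) : |Y ω ^ 2 - m ^ 2| ≤ a * (Y ω - m) ^ 2 + 1 / a := by
    have hsum : |Y ω + m| ≤ 2 := by linarith [abs_add_le (Y ω) m, hY_le ω]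
    have hamgm : 2 * |Y ω - m| ≤ a * |Y ω - m| ^ 2 + 1 / a := by
      have : 0 ≤ (a * |Y ω - m| - 1) ^ 2 / a := by positivity
      have hsq : (a * |Y ω - m| - 1) ^ 2 / a = a * |Y ω - m| ^ 2 + 1 / a - 2 * |Y ω - m| := by
        field_simp
        ring
      linarith
    rw [sq_sub_sq, abs_mul, ← sq_abs (Y ω - m)]
    exact (mul_le_mul_of_nonneg_right hsum (abs_nonneg _)).trans hamgm
  calc ∫ ω, |Y ω ^ 2 - m ^ 2| ∂ν ≤ ∫ ω, (a * (Y ω - m) ^ 2 + 1 / a) ∂ν :=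
        integral_mono_of_nonneg (.of_forall fun _ => abs_nonneg _)
          ((hint.const_mul a).add (integrable_const _)) (.of_forall hpoint)
    _ = a * ∫ ω, (Y ω - m) ^ 2 ∂ν + 1 / a := by
        simp [integral_add (hint.const_mul a) (integrable_const _), integral_const_mul]

theorem integral_pi_abs_sampleMean_sq_sub_le [Nonempty ι] (hY : Measurable Y)
    (hY_le : ∀ ω, |Y ω| ≤ 1) :
    ∫ ω, |sampleMean (fun i => Y (ω i)) ^ 2 - (∫ η, Y η ∂ν) ^ 2| ∂Measure.pi (fun _ : ι => ν)
      ≤ 2 / √(Fintype.card ι) := by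
  have hY_mem : MemLp Y 2 ν := .of_bound hY.aestronglyMeasurable 1 (.of_forall hY_le)
  have hvar : Var[Y; ν] ≤ 1 := by
    simpa using variance_le_sq_of_bounded (a := -1) (b := 1)
      (.of_forall fun ω => abs_le.1 (hY_le ω)) hY.aemeasurable
  have hmeas : Measurable fun ω : ι → Ω => sampleMean fun i => Y (ω i) := by
    unfold sampleMean
    fun_prop
  have ha : 0 < √(Fintype.card ι) := Real.sqrt_pos.2 (Nat.cast_pos.2 Fintype.card_pos)
  have hdev := integral_abs_sq_sub_sq_integral_le (ν := Measure.pi fun _ : ι => ν) hmeas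
    (fun ω => abs_sampleMean_le zero_le_one fun i => hY_le (ω i)) ha
  rw [integral_pi_sampleMean (hY_mem.integrable one_le_two), variance_pi_sampleMean hY_mem] at hdev
  calc _ ≤ √(Fintype.card ι) * (Var[Y; ν] / Fintype.card ι) + 1 / √(Fintype.card ι) := hdev
    _ = (Var[Y; ν] + 1) / √(Fintype.card ι) := by
        rw [mul_div_left_comm, Real.sqrt_div_self', mul_one_div, add_div]
    _ ≤ 2 / √(Fintype.card ι) := by
        gcongr
        linarith

end SampleMean

end SampleCovariance

section LaplacePrinciple

variable {Ω : Type*} [MeasurableSpace Ω] {P : Measure Ω} [IsProbabilityMeasure P] {V : Ω → ℝ}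

theorem integrable_exp_neg_mul_of_bddBelow (hV : Measurable V) {c : ℝ} (hVc : ∀ x, c ≤ V x)
    {k : ℝ} (hk : 0 ≤ k) : Integrable (fun x => Real.exp (-(k * V x))) P :=
  .of_bound (by fun_prop) (Real.exp (-(k * c))) <| .of_forall fun x => by
    rw [Real.norm_of_nonneg (Real.exp_nonneg _)]
    gcongr
    exact hVc x

theorem tilted_neg_mul_real_le (hV : Measurable V) {k : ℝ} (hk : 0 ≤ k)
    (hint : Integrable (fun x => Real.exp (-(k * V x))) P) {a : ℝ}
    (ha : 0 < P.real {x | V x < a}) (b : ℝ) :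
    (P.tilted fun x => -(k * V x)).real {x | b ≤ V x}
      ≤ Real.exp (-(k * (b - a))) / P.real {x | V x < a} := by
  have hA : MeasurableSet {x | V x < a} := measurableSet_lt hV measurable_const
  have hB : MeasurableSet {x | b ≤ V x} := measurableSet_le measurable_const hV
  have hnum : ∫ x in {x | b ≤ V x}, Real.exp (-(k * V x)) ∂P ≤ Real.exp (-(k * b)) := by
    calc ∫ x in {x | b ≤ V x}, Real.exp (-(k * V x)) ∂P
        ≤ ∫ _x in {x | b ≤ V x}, Real.exp (-(k * b)) ∂P := by
          refine setIntegral_mono_on hint.integrableOn integrableOn_const hB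
            fun x (hx : b ≤ V x) => ?_
          gcongr
      _ = P.real {x | b ≤ V x} * Real.exp (-(k * b)) := by simp
      _ ≤ Real.exp (-(k * b)) := mul_le_of_le_one_left (Real.exp_nonneg _) measureReal_le_one
  have hden : P.real {x | V x < a} * Real.exp (-(k * a)) ≤ ∫ x, Real.exp (-(k * V x)) ∂P := by
    calc P.real {x | V x < a} * Real.exp (-(k * a))
        = ∫ _x in {x | V x < a}, Real.exp (-(k * a)) ∂P := by simp
      _ ≤ ∫ x in {x | V x < a}, Real.exp (-(k * V x)) ∂P := by
          refine setIntegral_mono_on integrableOn_const hint.integrableOn hA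
            fun x (hx : V x < a) => ?_
          gcongr
      _ ≤ ∫ x, Real.exp (-(k * V x)) ∂P :=
          setIntegral_le_integral hint (.of_forall fun _ => Real.exp_nonneg _)
  have hratio : Real.exp (-(k * (b - a))) / P.real {x | V x < a}
      = Real.exp (-(k * b)) / (P.real {x | V x < a} * Real.exp (-(k * a))) := by
    rw [show -(k * (b - a)) = -(k * b) - -(k * a) by ring, Real.exp_sub]
    field_simp
  rw [measureReal_def, tilted_apply_eq_ofReal_integral' _ hB, integral_div, hratio,
    ENNReal.toReal_ofReal (by positivity)]
  gcongr

theorem integral_le_add_mul_measureReal {g : Ω → ℝ} (hg : Measurable g) (hg_nonneg : ∀ x, 0 ≤ g x)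
    {C : ℝ} (hgC : ∀ x, g x ≤ C) {ε : ℝ} (hε : 0 ≤ ε) {B : Set Ω} (hB : MeasurableSet B)
    (hgB : ∀ x ∉ B, g x ≤ ε) : ∫ x, g x ∂P ≤ ε + C * P.real B := by
  calc ∫ x, g x ∂P ≤ ∫ x, (ε + B.indicator (fun _ => C) x) ∂P := by
        refine integral_mono (.of_bound hg.aestronglyMeasurable C (.of_forall fun x => ?_))
          ((integrable_const _).add ((integrable_const C).indicator hB)) fun x => ?_
        · rw [Real.norm_of_nonneg (hg_nonneg x)]
          exact hgC x
        · by_cases hx : x ∈ B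
          · simpa [hx] using (hgC x).trans (le_add_of_nonneg_left hε)
          · simpa [hx] using hgB x hx
    _ = ε + C * P.real B := by
        rw [integral_add (integrable_const _) ((integrable_const C).indicator hB),
          integral_indicator_const C hB]
        simp [mul_comm]

theorem tendsto_integral_tilted_neg_mul (hV : Measurable V) {c : ℝ} (hVc : ∀ x, c ≤ V x)
    {g : Ω → ℝ} (hg : Measurable g) (hg_nonneg : ∀ x, 0 ≤ g x) {C : ℝ} (hgC : ∀ x, g x ≤ C)
    (hgap : ∀ ε > 0, ∃ a b, a < b ∧ 0 < P.real {x | V x < a} ∧ ∀ x, ε ≤ g x → b ≤ V x) :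
    Tendsto (fun k : ℝ => ∫ x, g x ∂P.tilted fun x => -(k * V x)) atTop (𝓝 0) := by
  refine tendsto_order.2 ⟨fun y hy => .of_forall fun k => hy.trans_le (integral_nonneg hg_nonneg),
    fun ε hε => ?_⟩
  obtain ⟨a, b, hab, ha, hb⟩ := hgap (ε / 2) (half_pos hε)
  obtain ⟨x₀⟩ := P.nonempty_of_neZero
  have hC : 0 ≤ C := (hg_nonneg x₀).trans (hgC x₀)
  have htail : Tendsto
      (fun k : ℝ => ε / 2 + C * (Real.exp (-(k * (b - a))) / P.real {x | V x < a}))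
      atTop (𝓝 (ε / 2)) := by
    have hexp : Tendsto (fun k : ℝ => Real.exp (-(k * (b - a)))) atTop (𝓝 0) :=
      Real.tendsto_exp_neg_atTop_nhds_zero.comp (tendsto_id.atTop_mul_const (sub_pos.2 hab))
    simpa using ((hexp.div_const _).const_mul C).const_add (ε / 2)
  filter_upwards [htail.eventually_lt_const (half_lt_self hε), eventually_ge_atTop 0]
    with k hk_lt hk
  have hexp_int := integrable_exp_neg_mul_of_bddBelow (P := P) hV hVc hk
  have := isProbabilityMeasure_tilted hexp_int
  calc ∫ x, g x ∂(P.tilted fun x => -(k * V x))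
      ≤ ε / 2 + C * (P.tilted fun x => -(k * V x)).real {x | b ≤ V x} :=
        integral_le_add_mul_measureReal hg hg_nonneg hgC (half_pos hε).le
          (measurableSet_le measurable_const hV)
          fun x hx => (not_le.1 fun h => hx (hb x h)).le
    _ ≤ ε / 2 + C * (Real.exp (-(k * (b - a))) / P.real {x | V x < a}) := by
        gcongr
        exact tilted_neg_mul_real_le hV hk hexp_int ha b
    _ < ε := hk_lt

theorem exists_gap_of_eq_zero_on_minimizers {X : Type*} [TopologicalSpace X] {V g : X → ℝ}
    (hV : Continuous V) (hV_coercive : Tendsto V (cocompact X) atTop) (hg : Continuous g)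
    (hg_min : ∀ x, (∀ y, V x ≤ V y) → g x = 0) (x₀ : X) {ε : ℝ} (hε : 0 < ε) :
    ∃ b, (∃ x, V x < b) ∧ ∀ x, ε ≤ g x → b ≤ V x := by
  by_cases! hne : ∃ y₀, ε ≤ g y₀
  · obtain ⟨y₀, hy₀⟩ := hne
    obtain ⟨y, hy, hmin⟩ := hV.continuousOn.exists_isMinOn' (s := {x | ε ≤ g x})
      (isClosed_le continuous_const hg) hy₀
      ((hV_coercive.eventually_ge_atTop _).filter_mono inf_le_left)
    refine ⟨V y, ?_, hmin⟩
    by_contra! hglobal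
    exact hε.not_ge (hg_min y hglobal ▸ hy)
  · exact ⟨V x₀ + 1, ⟨x₀, lt_add_one _⟩, fun x hx => absurd hx (hne x).not_ge⟩

theorem tendsto_integral_tilted_neg_mul_of_coercive {X : Type*} [TopologicalSpace X]
    [MeasurableSpace X] [OpensMeasurableSpace X] {P : Measure X} [IsProbabilityMeasure P]
    [P.IsOpenPosMeasure] {V g : X → ℝ} (hV : Continuous V)
    (hV_coercive : Tendsto V (cocompact X) atTop) (hg : Continuous g) (hg_nonneg : ∀ x, 0 ≤ g x)
    {C : ℝ} (hgC : ∀ x, g x ≤ C) (hg_min : ∀ x, (∀ y, V x ≤ V y) → g x = 0) :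
    Tendsto (fun k : ℝ => ∫ x, g x ∂P.tilted fun x => -(k * V x)) atTop (𝓝 0) := by
  have := P.nonempty_of_neZero
  obtain ⟨x₀, hx₀⟩ := hV.exists_forall_le hV_coercive
  refine tendsto_integral_tilted_neg_mul hV.measurable hx₀ hg.measurable hg_nonneg hgC
    fun ε hε => ?_
  obtain ⟨b, ⟨x, hx⟩, hb⟩ := exists_gap_of_eq_zero_on_minimizers hV hV_coercive hg hg_min x₀ hε
  obtain ⟨a, hxa, hab⟩ := exists_between hx
  have hopen : IsOpen {x | V x < a} := isOpen_lt hV continuous_const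
  exact ⟨a, b, hab, ENNReal.toReal_pos (hopen.measure_pos P ⟨x, hxa⟩).ne' (measure_ne_top _ _), hb⟩

end LaplacePrinciple

section HyperbolicTangent

theorem hasDerivAt_tanh (x : ℝ) : HasDerivAt Real.tanh (1 - Real.tanh x ^ 2) x := by
  have hcosh := (Real.cosh_pos x).ne'
  have h : HasDerivAt (fun y => Real.sinh y / Real.cosh y) _ x :=
    (Real.hasDerivAt_sinh x).div (Real.hasDerivAt_cosh x) hcosh
  simp only [← Real.tanh_eq_sinh_div_cosh] at h
  refine h.congr_deriv ?_
  rw [Real.tanh_eq_sinh_div_cosh]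
  field_simp

theorem continuous_tanh : Continuous Real.tanh :=
  continuous_iff_continuousAt.2 fun x => (hasDerivAt_tanh x).continuousAt

theorem strictMono_tanh : StrictMono Real.tanh :=
  strictMono_of_deriv_pos fun x => by
    simpa [(hasDerivAt_tanh x).deriv] using Real.abs_tanh_lt_one x

theorem strictConcaveOn_tanh : StrictConcaveOn ℝ (Set.Ici 0) Real.tanh := by
  refine StrictAntiOn.strictConcaveOn_of_deriv (convex_Ici 0) continuous_tanh.continuousOn ?_
  rw [interior_Ici]
  intro x (hx : 0 < x) y _ hxy
  have hx_pos : 0 < Real.tanh x := by simpa using strictMono_tanh hx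
  rw [(hasDerivAt_tanh x).deriv, (hasDerivAt_tanh y).deriv]
  nlinarith [strictMono_tanh hxy]

theorem tanh_lt_self {x : ℝ} (hx : 0 < x) : Real.tanh x < x := by
  have h := Convex.image_sub_lt_mul_sub_of_deriv_lt (f := Real.tanh) (C := 1) (convex_Ici 0)
    continuous_tanh.continuousOn
    (fun y _ => (hasDerivAt_tanh y).differentiableAt.differentiableWithinAt)
    (fun y hy => ?_) 0 Set.self_mem_Ici x hx.le hx
  · simpa using h
  · rw [interior_Ici] at hy
    have hy_pos : 0 < Real.tanh y := by simpa using strictMono_tanh hy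
    rw [(hasDerivAt_tanh y).deriv]
    nlinarith

theorem strictAntiOn_tanh_div : StrictAntiOn (fun x => Real.tanh x / x) (Set.Ioi 0) := by
  intro x (hx : 0 < x) y (hy : 0 < y) hxy
  simpa using strictConcaveOn_tanh.secant_strict_mono Set.self_mem_Ici hx.le hy.le hx.ne' hy.ne'
    hxy

theorem eq_of_eq_tanh_mul {β x y : ℝ} (hx : 0 < x) (hy : 0 < y)
    (hxβ : x = Real.tanh (β * x)) (hyβ : y = Real.tanh (β * y)) : x = y := by
  have hβ : 0 < β := by
    have : 0 < β * x := strictMono_tanh.lt_iff_lt.1 (by rwa [Real.tanh_zero, ← hxβ])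
    exact pos_of_mul_pos_left this hx.le
  have hslope {z : ℝ} (hz : 0 < z) (hzβ : z = Real.tanh (β * z)) :
      Real.tanh (β * z) / (β * z) = 1 / β := by
    rw [← hzβ]
    field_simp
  exact mul_left_cancel₀ hβ.ne' <| strictAntiOn_tanh_div.injOn (mul_pos hβ hx) (mul_pos hβ hy)
    ((hslope hx hxβ).trans (hslope hy hyβ).symm)

end HyperbolicTangent

section SpontaneousMagnetization

theorem isingMag_of_le_one {β : ℝ} (hβ : β ≤ 1) : isingMag β = 0 := by
  suffices {m : ℝ | 0 ≤ m ∧ m = Real.tanh (β * m)} = {0} by rw [isingMag, this, csSup_singleton]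
  refine Set.eq_singleton_iff_unique_mem.2 ⟨by simp, fun m ⟨hm, hmβ⟩ => ?_⟩
  refine hm.eq_or_lt.elim Eq.symm fun hm_pos => absurd hmβ (ne_of_gt ?_)
  calc Real.tanh (β * m) ≤ Real.tanh m :=
        strictMono_tanh.monotone (mul_le_of_le_one_left hm hβ)
    _ < m := tanh_lt_self hm_pos

theorem isingMag_eq_of_eq_tanh_mul {β m : ℝ} (hm : 0 < m) (hmβ : m = Real.tanh (β * m)) :
    isingMag β = m := by
  refine IsGreatest.csSup_eq ⟨⟨hm.le, hmβ⟩, fun m' ⟨hm', hmβ'⟩ => ?_⟩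
  rcases hm'.eq_or_lt with rfl | hm'_pos
  · exact hm.le
  · exact (eq_of_eq_tanh_mul hm'_pos hm hmβ' hmβ).le

/-- The potential `θ² / (2β) - log (2 cosh θ)`: the field of the Curie–Weiss model of size `n` at
inverse temperature `β`, rescaled so that it acts on each spin as `θ`, has density proportional to
`exp (-n V(θ))`. -/
def fieldPotential (β θ : ℝ) : ℝ := θ ^ 2 / (2 * β) - Real.log (2 * Real.cosh θ)

variable {β θ : ℝ}

theorem two_mul_cosh_pos (θ : ℝ) : 0 < 2 * Real.cosh θ := mul_pos two_pos (Real.cosh_pos θ)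

theorem hasDerivAt_fieldPotential (β θ : ℝ) :
    HasDerivAt (fieldPotential β) (θ / β - Real.tanh θ) θ := by
  have hlog := ((Real.hasDerivAt_cosh θ).const_mul 2).log (two_mul_cosh_pos θ).ne'
  refine (((hasDerivAt_pow 2 θ).div_const (2 * β)).sub hlog).congr_deriv ?_
  rw [Real.tanh_eq_sinh_div_cosh, mul_div_mul_left _ _ (two_ne_zero' ℝ), Nat.cast_ofNat,
    Nat.add_one_sub_one, pow_one, mul_div_mul_left _ _ (two_ne_zero' ℝ)]

theorem continuous_fieldPotential (β : ℝ) : Continuous (fieldPotential β) :=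
  continuous_iff_continuousAt.2 fun θ => (hasDerivAt_fieldPotential β θ).continuousAt

theorem le_fieldPotential (hβ : 0 < β) (θ : ℝ) :
    θ ^ 2 / (4 * β) - (β + Real.log 2) ≤ fieldPotential β θ := by
  have hcosh : Real.cosh θ ≤ Real.exp |θ| := by
    rw [Real.cosh_eq]
    linarith [Real.exp_le_exp.2 (le_abs_self θ), Real.exp_le_exp.2 (neg_le_abs θ)]
  have hlog : Real.log (2 * Real.cosh θ) ≤ Real.log 2 + |θ| := by
    rw [Real.log_mul two_ne_zero (Real.cosh_pos θ).ne', add_le_add_iff_left]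
    exact (Real.log_le_iff_le_exp (Real.cosh_pos θ)).2 hcosh
  have hsq : |θ| ≤ θ ^ 2 / (4 * β) + β := by
    rw [div_add' _ _ _ (by positivity), le_div_iff₀ (by positivity), ← sq_abs]
    nlinarith [sq_nonneg (|θ| - 2 * β)]
  have hhalf : θ ^ 2 / (2 * β) = θ ^ 2 / (4 * β) + θ ^ 2 / (4 * β) := by
    field_simp
    ring
  rw [fieldPotential]
  linarith

theorem tendsto_fieldPotential_cocompact (hβ : 0 < β) :
    Tendsto (fieldPotential β) (cocompact ℝ) atTop := by
  refine tendsto_atTop_mono (le_fieldPotential hβ) (tendsto_atTop_add_const_right _ _ ?_)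
  refine Tendsto.atTop_div_const (by positivity) ?_
  simpa only [Function.comp_def, Real.norm_eq_abs, sq_abs] using
    (tendsto_pow_atTop two_ne_zero).comp (tendsto_norm_cocompact_atTop (E := ℝ))

theorem exists_forall_fieldPotential_le (hβ : 0 < β) :
    ∃ θ, ∀ x, fieldPotential β θ ≤ fieldPotential β x :=
  (continuous_fieldPotential β).exists_forall_le (tendsto_fieldPotential_cocompact hβ)

theorem one_add_sq_div_two_le_cosh (x : ℝ) : 1 + x ^ 2 / 2 ≤ Real.cosh x := by
  rw [← Real.cosh_abs, ← sq_abs]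
  have hsinh : |x| / 2 ≤ Real.sinh (|x| / 2) := Real.self_le_sinh_iff.2 (by positivity)
  have hcosh := Real.cosh_two_mul (|x| / 2)
  rw [Real.cosh_sq, mul_div_cancel₀ _ two_ne_zero] at hcosh
  nlinarith [abs_nonneg x]

theorem fieldPotential_sqrt_lt (hβ : 1 < β) :
    fieldPotential β √(β - 1) < fieldPotential β 0 := by
  have hsq : √(β - 1) ^ 2 = β - 1 := Real.sq_sqrt (by linarith)
  have hlog : (β - 1) / (2 * β) < Real.log (Real.cosh √(β - 1)) := by
    calc (β - 1) / (2 * β) < (β - 1) / (β + 1) := by gcongr; linarith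
      _ = 1 - (1 + √(β - 1) ^ 2 / 2)⁻¹ := by
        rw [hsq, show 1 + (β - 1) / 2 = (β + 1) / 2 by ring, inv_div]
        have : β + 1 ≠ 0 := by linarith
        field_simp
        ring
      _ ≤ Real.log (1 + √(β - 1) ^ 2 / 2) := Real.one_sub_inv_le_log_of_pos (by positivity)
      _ ≤ Real.log (Real.cosh √(β - 1)) := by gcongr; exact one_add_sq_div_two_le_cosh _
  have hzero : fieldPotential β 0 = -Real.log 2 := by simp [fieldPotential]
  rw [hzero, fieldPotential, Real.log_mul two_ne_zero (Real.cosh_pos _).ne', hsq]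
  linarith

theorem ne_zero_of_forall_fieldPotential_le (hβ : 1 < β)
    (hθ : ∀ x, fieldPotential β θ ≤ fieldPotential β x) : θ ≠ 0 := by
  rintro rfl
  exact (fieldPotential_sqrt_lt hβ).not_ge (hθ _)

theorem tanh_sq_eq_isingMag_sq (hβ : 0 < β)
    (hθ : ∀ x, fieldPotential β θ ≤ fieldPotential β x) :
    Real.tanh θ ^ 2 = isingMag β ^ 2 := by
  have hmin : IsLocalMin (fieldPotential β) θ := .of_forall hθ
  have hcrit : θ / β = Real.tanh θ :=
    sub_eq_zero.1 (hmin.hasDerivAt_eq_zero (hasDerivAt_fieldPotential β θ))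
  rcases eq_or_ne θ 0 with rfl | hθ0
  · have hβ1 : β ≤ 1 := not_lt.1 fun h => ne_zero_of_forall_fieldPotential_le h hθ rfl
    simp [isingMag_of_le_one hβ1]
  · have hroot : |θ| / β = Real.tanh (β * (|θ| / β)) := by
      rw [mul_div_cancel₀ _ hβ.ne']
      rcases abs_choice θ with h | h <;> rw [h]
      · exact hcrit
      · rw [Real.tanh_neg, ← hcrit, neg_div]
    rw [isingMag_eq_of_eq_tanh_mul (div_pos (abs_pos.2 hθ0) hβ) hroot, ← hcrit, div_pow, div_pow,
      sq_abs]

theorem isingMag_sq_lt_one (β : ℝ) : isingMag β ^ 2 < 1 := by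
  rcases le_or_gt β 1 with hβ | hβ
  · simp [isingMag_of_le_one hβ]
  · obtain ⟨θ, hθ⟩ := exists_forall_fieldPotential_le (zero_lt_one.trans hβ)
    rw [← tanh_sq_eq_isingMag_sq (zero_lt_one.trans hβ) hθ]
    exact Real.tanh_sq_lt_one θ

theorem isingMag_sq_eq_zero_iff {β : ℝ} : isingMag β ^ 2 = 0 ↔ β ≤ 1 := by
  refine ⟨fun h => not_lt.1 fun hβ => ?_, fun hβ => by simp [isingMag_of_le_one hβ]⟩
  obtain ⟨θ, hθ⟩ := exists_forall_fieldPotential_le (zero_lt_one.trans hβ)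
  rw [← tanh_sq_eq_isingMag_sq (zero_lt_one.trans hβ) hθ, sq_eq_zero_iff] at h
  exact ne_zero_of_forall_fieldPotential_le hβ hθ
    (Real.tanh_injective (h.trans Real.tanh_zero.symm))

theorem one_sub_isingMag_sq_mul_lt_one {β₁ β₂ : ℝ} (h : ¬(β₁ ≤ 1 ∧ β₂ ≤ 1)) :
    (1 - isingMag β₁ ^ 2) * (1 - isingMag β₂ ^ 2) < 1 := by
  rw [← isingMag_sq_eq_zero_iff, ← isingMag_sq_eq_zero_iff] at h
  have h₁ := isingMag_sq_lt_one β₁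
  have h₂ := isingMag_sq_lt_one β₂
  by_contra! hge
  exact h ⟨by nlinarith [sq_nonneg (isingMag β₁), sq_nonneg (isingMag β₂)],
    by nlinarith [sq_nonneg (isingMag β₁), sq_nonneg (isingMag β₂)]⟩

theorem one_sub_isingMag_sq_mul_eq_one_iff {β₁ β₂ : ℝ} :
    (1 - isingMag β₁ ^ 2) * (1 - isingMag β₂ ^ 2) = 1 ↔ β₁ ≤ 1 ∧ β₂ ≤ 1 := by
  refine ⟨fun h => by_contra fun hβ => (one_sub_isingMag_sq_mul_lt_one hβ).ne h, fun ⟨h₁, h₂⟩ => ?_⟩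
  simp [isingMag_of_le_one h₁, isingMag_of_le_one h₂]

end SpontaneousMagnetization

section HubbardStratonovich

variable {Ω : Type*} [MeasurableSpace Ω] {μ : Measure Ω} {S : Ω → ℝ} {v : NNReal}
  {E : Type*} [NormedAddCommGroup E] [NormedSpace ℝ E] {f : Ω → E}

theorem integral_exp_mul_gaussianReal (v : NNReal) (s : ℝ) :
    ∫ θ, Real.exp (θ * s) ∂gaussianReal 0 v = Real.exp (v * s ^ 2 / 2) := by
  simpa [mgf, mul_comm s] using congrFun (mgf_fun_id_gaussianReal (μ := 0) (v := v)) s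

theorem integrable_exp_mul_smul_prod_gaussianReal [SFinite μ] (hS : Measurable S)
    (hf : AEStronglyMeasurable f μ)
    (hf_int : Integrable (fun ω => Real.exp (v * S ω ^ 2 / 2) • f ω) μ) :
    Integrable (fun p : ℝ × Ω => Real.exp (p.1 * S p.2) • f p.2) ((gaussianReal 0 v).prod μ) := by
  refine (integrable_prod_iff' ?_).2 ⟨.of_forall fun ω => ?_, ?_⟩
  · exact (by fun_prop : Measurable fun p : ℝ × Ω => Real.exp (p.1 * S p.2)).aestronglyMeasurable
      |>.smul hf.comp_snd
  · simpa only [mul_comm (S ω)] using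
      (integrable_exp_mul_gaussianReal (μ := 0) (v := v) (S ω)).smul_const (f ω)
  · simpa only [norm_smul, Real.norm_of_nonneg (Real.exp_nonneg _), integral_mul_const,
      integral_exp_mul_gaussianReal] using hf_int.norm

theorem integral_gaussianReal_integral_exp_mul_smul [SFinite μ] (hS : Measurable S)
    (hf : AEStronglyMeasurable f μ)
    (hf_int : Integrable (fun ω => Real.exp (v * S ω ^ 2 / 2) • f ω) μ) :
    ∫ θ, ∫ ω, Real.exp (θ * S ω) • f ω ∂μ ∂gaussianReal 0 v
      = ∫ ω, Real.exp (v * S ω ^ 2 / 2) • f ω ∂μ := by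
  have hint : Integrable (Function.uncurry fun θ ω => Real.exp (θ * S ω) • f ω)
      ((gaussianReal 0 v).prod μ) := integrable_exp_mul_smul_prod_gaussianReal hS hf hf_int
  by_cases hE : CompleteSpace E
  · simp only [integral_integral_swap hint, integral_smul_const, integral_exp_mul_gaussianReal]
  · simp [integral, hE]

variable [NeZero μ] [SFinite μ]

theorem exp_cgf_ae_eq_mgf (hS : Measurable S)
    (hexp : Integrable (fun ω => Real.exp (v * S ω ^ 2 / 2)) μ) :
    (fun θ => Real.exp (cgf S μ θ)) =ᵐ[gaussianReal 0 v] mgf S μ := by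
  have := integrable_exp_mul_smul_prod_gaussianReal (f := fun _ => (1 : ℝ)) hS
    aestronglyMeasurable_const (by simpa using hexp)
  filter_upwards [this.prod_right_ae] with θ hθ
  exact exp_cgf (by simpa using hθ)

theorem integral_exp_cgf_gaussianReal (hS : Measurable S)
    (hexp : Integrable (fun ω => Real.exp (v * S ω ^ 2 / 2)) μ) :
    ∫ θ, Real.exp (cgf S μ θ) ∂gaussianReal 0 v = ∫ ω, Real.exp (v * S ω ^ 2 / 2) ∂μ := by
  simpa [mgf, integral_congr_ae (exp_cgf_ae_eq_mgf hS hexp)] using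
    integral_gaussianReal_integral_exp_mul_smul (f := fun _ => (1 : ℝ)) hS
      aestronglyMeasurable_const (by simpa using hexp)

theorem integrable_exp_cgf_gaussianReal (hS : Measurable S)
    (hexp : Integrable (fun ω => Real.exp (v * S ω ^ 2 / 2)) μ) :
    Integrable (fun θ => Real.exp (cgf S μ θ)) (gaussianReal 0 v) := by
  refine .of_integral_ne_zero ?_
  rw [integral_exp_cgf_gaussianReal hS hexp]
  exact (integral_exp_pos hexp).ne'

/- The square in the exponent is linearized through `exp (v s² / 2) = 𝔼 exp (θ s)`, `θ ∼ N(0, v)`;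
the price is the factor `exp (cgf S μ θ)` in the law of `θ`. -/
theorem integral_tilted_sq_eq_integral_integral_tilted (hS : Measurable S)
    (hexp : Integrable (fun ω => Real.exp (v * S ω ^ 2 / 2)) μ) (hf : AEStronglyMeasurable f μ)
    (hf_int : Integrable (fun ω => Real.exp (v * S ω ^ 2 / 2) • f ω) μ) :
    ∫ ω, f ω ∂(μ.tilted fun ω => v * S ω ^ 2 / 2)
      = ∫ θ, ∫ ω, f ω ∂(μ.tilted fun ω => θ * S ω)
          ∂((gaussianReal 0 v).tilted (cgf S μ)) := by
  have hexp_cgf := exp_cgf_ae_eq_mgf hS hexp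
  have hfibre : ∀ᵐ θ ∂gaussianReal 0 v,
      Real.exp (cgf S μ θ) • ∫ ω, f ω ∂(μ.tilted fun ω => θ * S ω)
        = ∫ ω, Real.exp (θ * S ω) • f ω ∂μ := by
    filter_upwards [hexp_cgf] with θ hθ
    have hmgf : mgf S μ θ ≠ 0 := hθ ▸ (Real.exp_pos _).ne'
    simp only [integral_tilted_mul_eq_mgf, hθ, div_eq_inv_mul, mul_smul, integral_smul,
      smul_inv_smul₀ hmgf]
  rw [integral_tilted, integral_tilted, integral_exp_cgf_gaussianReal hS hexp]
  simp only [div_eq_inv_mul, mul_smul, integral_smul, integral_congr_ae hfibre,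
    integral_gaussianReal_integral_exp_mul_smul hS hf hf_int]

end HubbardStratonovich

section TiltedMeasure

theorem tilted_add_const {α : Type*} [MeasurableSpace α] (μ : Measure α) (f : α → ℝ) (c : ℝ) :
    (μ.tilted fun x => f x + c) = μ.tilted f := by
  simp only [Measure.tilted, Real.exp_add, integral_mul_const,
    mul_div_mul_right _ _ (Real.exp_pos c).ne']

end TiltedMeasure

section TiltedCount

variable {α ι : Type*} [Fintype ι]

theorem sum_exp_sum_eq_prod_sum_exp [Fintype α] [DecidableEq ι] (f : ι → α → ℝ) :
    ∑ s : ι → α, Real.exp (∑ i, f i (s i)) = ∏ i, ∑ a, Real.exp (f i a) := by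
  simp only [Real.exp_sum, Fintype.prod_sum]

variable [MeasurableSpace α] [MeasurableSingletonClass α]

theorem isProbabilityMeasure_tilted_count [Finite α] [Nonempty α] (f : α → ℝ) :
    IsProbabilityMeasure (Measure.count.tilted f) :=
  isProbabilityMeasure_tilted .of_finite

theorem tilted_count_singleton [Fintype α] (f : α → ℝ) (a : α) :
    Measure.count.tilted f {a} = ENNReal.ofReal (Real.exp (f a) / ∑ b, Real.exp (f b)) := by
  simp [tilted_apply]

theorem tilted_count_eq_sum_smul_dirac [Fintype α] (f : α → ℝ) :
    Measure.count.tilted f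
      = ∑ a, ENNReal.ofReal (Real.exp (f a) / ∑ b, Real.exp (f b)) • Measure.dirac a := by
  rw [← Measure.sum_smul_dirac (Measure.count.tilted f), Measure.sum_fintype]
  simp only [tilted_count_singleton]

theorem tilted_count_sum [Finite α] [Nonempty α] (f : ι → α → ℝ) :
    Measure.count.tilted (fun s : ι → α => ∑ i, f i (s i))
      = Measure.pi fun i => Measure.count.tilted (f i) := by
  classical
  have := Fintype.ofFinite α
  have (i : ι) := isProbabilityMeasure_tilted_count (f i)
  refine Measure.ext_of_singleton fun s => ?_
  simp only [tilted_count_singleton, Measure.pi_singleton, sum_exp_sum_eq_prod_sum_exp]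
  rw [Real.exp_sum, ← Finset.prod_div_distrib]
  exact ENNReal.ofReal_prod_of_nonneg fun i _ => by positivity

end TiltedCount

section Spin

/-- The value `±1` of a single spin, with `true` standing for `+1` as in `pmVec`. -/
def spin (b : Bool) : ℝ := if b then 1 else -1

theorem pmVec_apply {ι : Type*} (s : ι → Bool) (i : ι) : pmVec s i = spin (s i) := rfl

theorem spin_sq (b : Bool) : spin b ^ 2 = 1 := by cases b <;> simp [spin]

theorem abs_spin (b : Bool) : |spin b| = 1 := by cases b <;> simp [spin]

theorem abs_pmVec {ι : Type*} (s : ι → Bool) (i : ι) : |pmVec s i| = 1 := abs_spin (s i)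

theorem sampleCov_pmVec_self {ι : Type*} [Fintype ι] [Nonempty ι] (s : ι → Bool) :
    sampleCov (pmVec s) (pmVec s) = 1 - sampleMean (pmVec s) ^ 2 := by
  simp [sampleCov_self, pmVec_apply, spin_sq]

/-- The law of a single spin in the external field `θ`. -/
def spinLaw (θ : ℝ) : Measure Bool := Measure.count.tilted fun b => θ * spin b

instance (θ : ℝ) : IsProbabilityMeasure (spinLaw θ) := isProbabilityMeasure_tilted_count _

theorem mgf_spin (θ : ℝ) : mgf spin Measure.count θ = 2 * Real.cosh θ := by
  simp [mgf, integral_count, spin, Real.cosh_eq]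
  ring

theorem integral_spin (θ : ℝ) : ∫ b, spin b ∂spinLaw θ = Real.tanh θ := by
  rw [spinLaw, integral_tilted_mul_eq_mgf, mgf_spin]
  simp [integral_count, spin, Real.tanh_eq_sinh_div_cosh, Real.sinh_eq, Real.cosh_eq]
  field_simp
  ring

theorem variance_spin (θ : ℝ) : Var[spin; spinLaw θ] = 1 - Real.tanh θ ^ 2 := by
  rw [variance_eq_sub (.of_bound (by fun_prop) 1 (.of_forall fun b => (abs_spin b).le)),
    integral_spin]
  simp only [Pi.pow_apply, spin_sq, integral_const, probReal_univ, one_smul]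

end Spin

section CurieWeiss

variable {ι : Type*} [Fintype ι]

theorem isingMeasure_eq_map_tilted [DecidableEq ι] (β : ℝ) (Q : Matrix ι ι ℝ) :
    isingMeasure ι β Q = Measure.map pmVec
      (Measure.count.tilted fun s => β / 2 * (pmVec s ⬝ᵥ Q.mulVec (pmVec s))) := by
  have hpmVec : Measurable (pmVec : (ι → Bool) → ι → ℝ) := measurable_of_finite _
  rw [tilted_count_eq_sum_smul_dirac, ← Measure.mapₗ_apply_of_measurable hpmVec, map_sum]
  simp only [isingMeasure, isingZ, isingWeight, Measure.map_smul,
    Measure.mapₗ_apply_of_measurable hpmVec, Measure.map_dirac' hpmVec]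

/-- The Curie–Weiss law at inverse temperature `β` on boolean configurations, where
`true` stands for the spin `+1`. The diagonal of the interaction, which only contributes a constant
to the exponent, is included. -/
def curieWeiss (ι : Type*) [Fintype ι] (β : ℝ) : Measure (ι → Bool) :=
  Measure.count.tilted fun s => β / Fintype.card ι * (∑ i, spin (s i)) ^ 2 / 2

instance (β : ℝ) : IsProbabilityMeasure (curieWeiss ι β) := isProbabilityMeasure_tilted_count _

theorem pmVec_dotProduct_QCW_mulVec (n : ℕ) (s : Fin n → Bool) :
    pmVec s ⬝ᵥ (QCW n).mulVec (pmVec s) = ((∑ i, spin (s i)) ^ 2 - n) / n := by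
  have hQ : QCW n = (n : ℝ)⁻¹ • (vecMulVec 1 1 - 1) := by
    ext i j
    by_cases h : i = j <;> simp [QCW, vecMulVec, h]
  have hspins : pmVec s ⬝ᵥ pmVec s = n := by
    simp [dotProduct, pmVec_apply, ← pow_two, spin_sq]
  rw [hQ, smul_mulVec, dotProduct_smul, sub_mulVec, one_mulVec, dotProduct_sub, hspins,
    vecMulVec_mulVec]
  simp [pmVec_apply, dotProduct, ← Finset.sum_mul]
  ring

theorem isingMeasure_QCW (n : ℕ) (β : ℝ) :
    isingMeasure (Fin n) β (QCW n) = Measure.map pmVec (curieWeiss (Fin n) β) := by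
  have hexponent (s : Fin n → Bool) : β / 2 * (pmVec s ⬝ᵥ (QCW n).mulVec (pmVec s))
      = β / Fintype.card (Fin n) * (∑ i, spin (s i)) ^ 2 / 2 + -(β * n / (2 * n)) := by
    rw [pmVec_dotProduct_QCW_mulVec, Fintype.card_fin]
    ring
  simp only [isingMeasure_eq_map_tilted, curieWeiss, hexponent, tilted_add_const]

/-- The law of the random external field given which the Curie–Weiss spins are independent. -/
def fieldLaw (n : ℕ) (β : ℝ) : Measure ℝ :=
  (gaussianReal 0 (β / n).toNNReal).tilted fun θ => n * Real.log (2 * Real.cosh θ)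

theorem cgf_sum_spin (θ : ℝ) :
    cgf (fun s : ι → Bool => ∑ i, spin (s i)) Measure.count θ
      = Fintype.card ι * Real.log (2 * Real.cosh θ) := by
  classical
  simp only [← mgf_spin, cgf, mgf, integral_count, Finset.mul_sum]
  rw [sum_exp_sum_eq_prod_sum_exp fun (_ : ι) b => θ * spin b]
  simp

theorem tilted_mul_sum_spin (θ : ℝ) :
    Measure.count.tilted (fun s : ι → Bool => θ * ∑ i, spin (s i))
      = Measure.pi fun _ => spinLaw θ := by
  simp only [Finset.mul_sum, spinLaw, tilted_count_sum fun (_ : ι) b => θ * spin b]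

theorem integral_curieWeiss {E : Type*} [NormedAddCommGroup E] [NormedSpace ℝ E] {β : ℝ}
    (hβ : 0 ≤ β) (f : (ι → Bool) → E) :
    ∫ s, f s ∂curieWeiss ι β
      = ∫ θ, ∫ s, f s ∂(Measure.pi fun _ : ι => spinLaw θ) ∂fieldLaw (Fintype.card ι) β := by
  have hmix := integral_tilted_sq_eq_integral_integral_tilted (v := (β / Fintype.card ι).toNNReal)
    (μ := Measure.count) (S := fun s : ι → Bool => ∑ i, spin (s i)) (measurable_of_finite _)
    .of_finite (f := f) .of_discrete .of_finite
  rw [Real.coe_toNNReal _ (by positivity)] at hmix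
  simpa only [funext cgf_sum_spin, tilted_mul_sum_spin, curieWeiss, fieldLaw] using hmix

instance (n : ℕ) (β : ℝ) : IsProbabilityMeasure (fieldLaw n β) := by
  have hint := integrable_exp_cgf_gaussianReal (v := (β / n).toNNReal) (μ := Measure.count)
    (S := fun s : Fin n → Bool => ∑ i, spin (s i)) (measurable_of_finite _) .of_finite
  simp only [cgf_sum_spin, Fintype.card_fin] at hint
  exact isProbabilityMeasure_tilted hint

end CurieWeiss

section FieldLaw

variable {β : ℝ}

theorem gaussianReal_zero_eq_tilted {v : NNReal} (hv : v ≠ 0) :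
    gaussianReal 0 v = volume.tilted fun x => -(x ^ 2 / (2 * v)) := by
  have hgauss : ∫ x : ℝ, Real.exp (-(x ^ 2 / (2 * v))) = √(2 * Real.pi * v) := by
    simpa [div_eq_inv_mul, mul_comm, mul_left_comm] using integral_gaussian (2 * v : ℝ)⁻¹
  rw [gaussianReal_of_var_ne_zero 0 hv, Measure.tilted]
  congr with x
  rw [hgauss, gaussianPDF, gaussianPDFReal, sub_zero, neg_div, inv_mul_eq_div]

theorem integrable_exp_neg_fieldPotential (hβ : 0 < β) :
    Integrable fun θ => Real.exp (-fieldPotential β θ) := by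
  refine ((integrable_exp_neg_mul_sq (b := (4 * β)⁻¹) (by positivity)).const_mul
    (Real.exp (β + Real.log 2))).mono'
    (continuous_fieldPotential β).neg.rexp.aestronglyMeasurable <| .of_forall fun θ => ?_
  rw [Real.norm_of_nonneg (Real.exp_nonneg _), ← Real.exp_add]
  gcongr
  linarith [le_fieldPotential hβ θ, div_eq_inv_mul (θ ^ 2) (4 * β)]

theorem fieldLaw_eq_tilted_neg_fieldPotential (hβ : 0 < β) {n : ℕ} (hn : n ≠ 0) :
    fieldLaw n β = volume.tilted fun θ => -(n * fieldPotential β θ) := by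
  have hn_pos : (0 : ℝ) < n := by positivity
  have hv : (β / n).toNNReal ≠ 0 := (Real.toNNReal_pos.2 (by positivity)).ne'
  have hint : Integrable fun θ : ℝ => Real.exp (-(θ ^ 2 / (2 * (β / n).toNNReal))) := by
    simpa only [neg_mul, inv_mul_eq_div] using
      integrable_exp_neg_mul_sq (b := (2 * (β / n).toNNReal)⁻¹) (by positivity)
  rw [fieldLaw, gaussianReal_zero_eq_tilted hv, tilted_tilted hint]
  congr with θ
  simp only [Pi.add_apply, fieldPotential, Real.coe_toNNReal _ (div_pos hβ hn_pos).le]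
  field_simp
  ring

/-- The mean distance, over the random field, from the squared conditional mean `tanh θ ^ 2` of a
spin to its limit `m(β) ^ 2`. -/
def fieldDeviation (n : ℕ) (β : ℝ) : ℝ :=
  ∫ θ, |Real.tanh θ ^ 2 - isingMag β ^ 2| ∂fieldLaw n β

theorem tendsto_fieldDeviation (hβ : 0 ≤ β) :
    Tendsto (fun n => fieldDeviation n β) atTop (𝓝 0) := by
  obtain rfl | hβ := hβ.eq_or_lt
  · simp [fieldDeviation, fieldLaw, integral_tilted, isingMag_of_le_one]
  have hint := integrable_exp_neg_fieldPotential hβ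
  set P := volume.tilted fun θ => -fieldPotential β θ
  have : IsProbabilityMeasure P := isProbabilityMeasure_tilted hint
  have : P.IsOpenPosMeasure := (absolutelyContinuous_tilted hint).isOpenPosMeasure
  have hlaplace := tendsto_integral_tilted_neg_mul_of_coercive (P := P)
    (continuous_fieldPotential β) (tendsto_fieldPotential_cocompact hβ)
    (g := fun θ => |Real.tanh θ ^ 2 - isingMag β ^ 2|)
    (by have := continuous_tanh; fun_prop) (fun _ => abs_nonneg _) (C := 1)
    (fun θ => abs_le.2 ⟨by
      nlinarith [isingMag_sq_lt_one β, sq_nonneg (Real.tanh θ)], by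
      nlinarith [Real.tanh_sq_lt_one θ, sq_nonneg (isingMag β)]⟩)
    fun θ hθ => by rw [tanh_sq_eq_isingMag_sq hβ hθ, sub_self, abs_zero]
  refine (hlaplace.comp ((tendsto_natCast_atTop_atTop (R := ℝ)).atTop_add
    (tendsto_const_nhds (x := -1)))).congr' ?_
  filter_upwards [eventually_ne_atTop 0] with n hn
  rw [fieldDeviation, fieldLaw_eq_tilted_neg_fieldPotential hβ hn, Function.comp_apply,
    tilted_tilted hint]
  congr with θ
  simp
  ring

end FieldLaw

section CurieWeissAsymptotics

theorem integrable_abs_tanh_sq_sub (μ : Measure ℝ) [IsFiniteMeasure μ] (c : ℝ) :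
    Integrable (fun θ => |Real.tanh θ ^ 2 - c|) μ := by
  have htanh : Integrable (fun θ => Real.tanh θ ^ 2) μ :=
    .of_bound (continuous_tanh.pow 2).aestronglyMeasurable 1 <| .of_forall fun θ => by
      simpa using (Real.tanh_sq_lt_one θ).le
  exact (htanh.sub (integrable_const c)).abs

variable {ι : Type*} [Fintype ι] [Nonempty ι] {β : ℝ}

theorem integral_pi_spinLaw_abs_sampleMean_sq_sub_le (θ : ℝ) :
    ∫ s, |sampleMean (pmVec s) ^ 2 - Real.tanh θ ^ 2| ∂Measure.pi (fun _ : ι => spinLaw θ)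
      ≤ 2 / √(Fintype.card ι) := by
  have hle := integral_pi_abs_sampleMean_sq_sub_le (ι := ι) (ν := spinLaw θ)
    (measurable_of_finite spin) fun b => (abs_spin b).le
  rw [integral_spin] at hle
  exact hle

theorem integral_curieWeiss_abs_sampleMean_sq_sub_le (hβ : 0 ≤ β) :
    ∫ s, |sampleMean (pmVec s) ^ 2 - isingMag β ^ 2| ∂curieWeiss ι β
      ≤ 2 / √(Fintype.card ι) + fieldDeviation (Fintype.card ι) β := by
  have hint := integrable_abs_tanh_sq_sub (fieldLaw (Fintype.card ι) β) (isingMag β ^ 2)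
  have hfibre (θ : ℝ) :
      ∫ s, |sampleMean (pmVec s) ^ 2 - isingMag β ^ 2| ∂Measure.pi (fun _ : ι => spinLaw θ)
        ≤ 2 / √(Fintype.card ι) + |Real.tanh θ ^ 2 - isingMag β ^ 2| := by
    calc ∫ s, |sampleMean (pmVec s) ^ 2 - isingMag β ^ 2| ∂Measure.pi (fun _ : ι => spinLaw θ)
        ≤ ∫ s, (|sampleMean (pmVec s) ^ 2 - Real.tanh θ ^ 2|
              + |Real.tanh θ ^ 2 - isingMag β ^ 2|) ∂Measure.pi (fun _ : ι => spinLaw θ) :=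
          integral_mono .of_finite .of_finite fun s => abs_sub_le _ _ _
      _ ≤ 2 / √(Fintype.card ι) + |Real.tanh θ ^ 2 - isingMag β ^ 2| := by
          rw [integral_add .of_finite .of_finite]
          simpa using integral_pi_spinLaw_abs_sampleMean_sq_sub_le θ
  rw [integral_curieWeiss hβ]
  calc _ ≤ ∫ θ, (2 / √(Fintype.card ι) + |Real.tanh θ ^ 2 - isingMag β ^ 2|)
            ∂fieldLaw (Fintype.card ι) β :=
        integral_mono_of_nonneg (.of_forall fun θ => integral_nonneg fun s => abs_nonneg _)
          ((integrable_const _).add hint) (.of_forall hfibre)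
    _ = _ := by simp [fieldDeviation, integral_add (integrable_const _) hint]

theorem abs_exp_neg_mul_one_sub_sub_le {k q a b : ℝ} (hk : 0 ≤ k) (hq : q ∈ Set.Icc 0 1)
    (ha : a ≤ 1) (hb : b ≤ 1) :
    |Real.exp (-(k * (q * (1 - a)))) - Real.exp (-(k * (q * (1 - b))))| ≤ k * |a - b| := by
  obtain ⟨hq_nonneg, hq_le⟩ := hq
  have := sub_nonneg.2 ha
  have := sub_nonneg.2 hb
  calc |Real.exp (-(k * (q * (1 - a)))) - Real.exp (-(k * (q * (1 - b))))|
      ≤ |k * (q * (1 - a)) - k * (q * (1 - b))| :=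
        abs_exp_neg_sub_exp_neg_le (by positivity) (by positivity)
    _ = k * q * |a - b| := by
        rw [show k * (q * (1 - a)) - k * (q * (1 - b)) = k * q * (b - a) by ring, abs_mul,
          abs_of_nonneg (by positivity), abs_sub_comm]
    _ ≤ k * |a - b| := by
        gcongr
        exact mul_le_of_le_one_right hk hq_le

theorem norm_integral_curieWeiss_cexp_sampleCov_sub_le (hβ : 0 ≤ β) {x : ι → ℝ}
    (hx : ∀ i, |x i| ≤ 1) (t : ℝ) :
    ‖∫ s, Complex.exp ((t * (√(Fintype.card ι) * sampleCov x (pmVec s)) : ℝ) * Complex.I)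
          ∂curieWeiss ι β
        - (Real.exp (-(t ^ 2 / 2 * (sampleCov x x * (1 - isingMag β ^ 2)))) : ℂ)‖
      ≤ 128 * |t| ^ 3 * Real.exp (4 * |t|) / √(Fintype.card ι)
        + t ^ 2 / 2 * fieldDeviation (Fintype.card ι) β := by
  set K := 128 * |t| ^ 3 * Real.exp (4 * |t|) / √(Fintype.card ι)
  set G : ℂ := (Real.exp (-(t ^ 2 / 2 * (sampleCov x x * (1 - isingMag β ^ 2)))) : ℂ) with hG
  set F : (ι → Bool) → ℂ := fun s =>
    Complex.exp ((t * (√(Fintype.card ι) * sampleCov x (pmVec s)) : ℝ) * Complex.I)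
  have hint := integrable_abs_tanh_sq_sub (fieldLaw (Fintype.card ι) β) (isingMag β ^ 2)
  have hclt (θ : ℝ) : ‖∫ s, F s ∂Measure.pi (fun _ : ι => spinLaw θ)
      - (Real.exp (-(t ^ 2 / 2 * (sampleCov x x * (1 - Real.tanh θ ^ 2)))) : ℂ)‖ ≤ K := by
    rw [← variance_spin]
    exact norm_integral_pi_cexp_sampleCov_sub_le (measurable_of_finite spin)
      (fun b => (abs_spin b).le) hx t
  have hfibre (θ : ℝ) : ‖∫ s, (F s - G) ∂Measure.pi (fun _ : ι => spinLaw θ)‖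
      ≤ K + t ^ 2 / 2 * |Real.tanh θ ^ 2 - isingMag β ^ 2| := by
    rw [integral_sub .of_finite .of_finite, integral_const, probReal_univ, one_smul]
    refine (norm_sub_le_norm_sub_add_norm_sub _ _ _).trans (add_le_add (hclt θ) ?_)
    rw [hG, ← Complex.ofReal_sub, Complex.norm_real, Real.norm_eq_abs]
    exact abs_exp_neg_mul_one_sub_sub_le (by positivity)
      ⟨sampleCov_self_nonneg x, sampleCov_self_le_one hx⟩ (Real.tanh_sq_lt_one θ).le
      (isingMag_sq_lt_one β).le
  calc ‖∫ s, F s ∂curieWeiss ι β - G‖ = ‖∫ s, (F s - G) ∂curieWeiss ι β‖ := by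
        simp [integral_sub (μ := curieWeiss ι β) (f := F) .of_finite .of_finite]
    _ ≤ ∫ θ, (K + t ^ 2 / 2 * |Real.tanh θ ^ 2 - isingMag β ^ 2|)
          ∂fieldLaw (Fintype.card ι) β := by
        rw [integral_curieWeiss hβ]
        exact norm_integral_le_of_norm_le ((integrable_const K).add (hint.const_mul _))
          (.of_forall hfibre)
    _ = K + t ^ 2 / 2 * fieldDeviation (Fintype.card ι) β := by
        simp [fieldDeviation, integral_add (integrable_const _) (hint.const_mul _),
          integral_const_mul]

theorem norm_integral_curieWeiss_prod_cexp_sampleCov_sub_le {β₁ β₂ : ℝ} (hβ₁ : 0 ≤ β₁)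
    (hβ₂ : 0 ≤ β₂) (t : ℝ) :
    ‖∫ p, Complex.exp
          ((t * (√(Fintype.card ι) * sampleCov (pmVec p.1) (pmVec p.2)) : ℝ) * Complex.I)
          ∂(curieWeiss ι β₁).prod (curieWeiss ι β₂)
        - (Real.exp (-(t ^ 2 / 2 * ((1 - isingMag β₁ ^ 2) * (1 - isingMag β₂ ^ 2)))) : ℂ)‖
      ≤ 128 * |t| ^ 3 * Real.exp (4 * |t|) / √(Fintype.card ι)
        + t ^ 2 / 2 * fieldDeviation (Fintype.card ι) β₂
        + t ^ 2 / 2 * (2 / √(Fintype.card ι) + fieldDeviation (Fintype.card ι) β₁) := by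
  set m₁ := isingMag β₁
  set m₂ := isingMag β₂
  set G : ℂ := (Real.exp (-(t ^ 2 / 2 * ((1 - m₁ ^ 2) * (1 - m₂ ^ 2)))) : ℂ) with hG
  set F : (ι → Bool) → ℂ := fun s => ∫ s', Complex.exp
    ((t * (√(Fintype.card ι) * sampleCov (pmVec s) (pmVec s')) : ℝ) * Complex.I) ∂curieWeiss ι β₂
  set B := 128 * |t| ^ 3 * Real.exp (4 * |t|) / √(Fintype.card ι)
    + t ^ 2 / 2 * fieldDeviation (Fintype.card ι) β₂
  have hquenched (s : ι → Bool) :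
      ‖F s - G‖ ≤ B + t ^ 2 / 2 * |sampleMean (pmVec s) ^ 2 - m₁ ^ 2| := by
    have hx (i : ι) : |pmVec s i| ≤ 1 := (abs_pmVec s i).le
    have hmean : sampleMean (pmVec s) ^ 2 ≤ 1 :=
      (sq_le_one_iff_abs_le_one _).2 (abs_sampleMean_le zero_le_one hx)
    refine (norm_sub_le_norm_sub_add_norm_sub _ _ _).trans
      (add_le_add (norm_integral_curieWeiss_cexp_sampleCov_sub_le hβ₂ hx t) ?_)
    rw [hG, ← Complex.ofReal_sub, Complex.norm_real, Real.norm_eq_abs, sampleCov_pmVec_self,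
      mul_comm (1 - sampleMean (pmVec s) ^ 2), mul_comm (1 - m₁ ^ 2)]
    exact abs_exp_neg_mul_one_sub_sub_le (by positivity)
      ⟨sub_nonneg.2 (isingMag_sq_lt_one β₂).le, sub_le_self _ (sq_nonneg _)⟩ hmean
      (isingMag_sq_lt_one β₁).le
  calc _ = ‖∫ s, (F s - G) ∂curieWeiss ι β₁‖ := by
        rw [integral_prod _ .of_finite, integral_sub .of_finite .of_finite, integral_const,
          probReal_univ, one_smul]
    _ ≤ ∫ s, (B + t ^ 2 / 2 * |sampleMean (pmVec s) ^ 2 - m₁ ^ 2|) ∂curieWeiss ι β₁ :=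
        norm_integral_le_of_norm_le .of_finite (.of_forall hquenched)
    _ = B + t ^ 2 / 2 * ∫ s, |sampleMean (pmVec s) ^ 2 - m₁ ^ 2| ∂curieWeiss ι β₁ := by
        rw [integral_add .of_finite .of_finite, integral_const_mul]
        simp
    _ ≤ _ := by
        gcongr
        exact integral_curieWeiss_abs_sampleMean_sq_sub_le hβ₁

end CurieWeissAsymptotics

section CentralLimit

theorem tendstoInDistribution_of_tendsto_charFun {μ : ℕ → Measure ℝ} {ν : Measure ℝ}
    [∀ n, IsProbabilityMeasure (μ n)] [IsProbabilityMeasure ν]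
    (h : ∀ t, Tendsto (fun n => charFun (μ n) t) atTop (𝓝 (charFun ν t))) :
    _root_.TendstoInDistribution μ ν :=
  ProbabilityMeasure.tendsto_iff_forall_integral_tendsto.1 <|
    ProbabilityMeasure.tendsto_of_tendsto_charFun (μ := fun n => ⟨μ n, inferInstance⟩)
      (μ₀ := ⟨ν, inferInstance⟩) h

/-- The law of `√n Tₙ` for independent Curie–Weiss samples of size `n`. -/
def scaledSampleCovLaw (n : ℕ) (β₁ β₂ : ℝ) : Measure ℝ :=
  Measure.map
    (fun p : (Fin n → Bool) × (Fin n → Bool) => √n * sampleCov (pmVec p.1) (pmVec p.2))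
    ((curieWeiss (Fin n) β₁).prod (curieWeiss (Fin n) β₂))

instance (n : ℕ) (β₁ β₂ : ℝ) : IsProbabilityMeasure (scaledSampleCovLaw n β₁ β₂) :=
  Measure.isProbabilityMeasure_map .of_discrete

theorem map_sampleCov_isingMeasure_QCW (n : ℕ) (β₁ β₂ : ℝ) :
    Measure.map (fun p : (Fin n → ℝ) × (Fin n → ℝ) => √n * sampleCov p.1 p.2)
        ((isingMeasure (Fin n) β₁ (QCW n)).prod (isingMeasure (Fin n) β₂ (QCW n)))
      = scaledSampleCovLaw n β₁ β₂ := by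
  have hpmVec : Measurable (pmVec : (Fin n → Bool) → Fin n → ℝ) := measurable_of_finite _
  rw [isingMeasure_QCW, isingMeasure_QCW, Measure.map_prod_map _ _ hpmVec hpmVec,
    Measure.map_map (continuous_sampleCov.const_mul _).measurable (hpmVec.prodMap hpmVec)]
  rfl

theorem norm_charFun_scaledSampleCovLaw_sub_le {β₁ β₂ : ℝ} (hβ₁ : 0 ≤ β₁) (hβ₂ : 0 ≤ β₂) (t : ℝ)
    {n : ℕ} (hn : n ≠ 0) :
    ‖charFun (scaledSampleCovLaw n β₁ β₂) t
        - (Real.exp (-(t ^ 2 / 2 * ((1 - isingMag β₁ ^ 2) * (1 - isingMag β₂ ^ 2)))) : ℂ)‖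
      ≤ 128 * |t| ^ 3 * Real.exp (4 * |t|) / √n + t ^ 2 / 2 * fieldDeviation n β₂
        + t ^ 2 / 2 * (2 / √n + fieldDeviation n β₁) := by
  have := NeZero.mk hn
  have hle := norm_integral_curieWeiss_prod_cexp_sampleCov_sub_le (ι := Fin n) hβ₁ hβ₂ t
  rw [scaledSampleCovLaw, charFun_apply_real, integral_map .of_discrete (by fun_prop)]
  simpa using hle

theorem tendsto_charFun_scaledSampleCovLaw {β₁ β₂ : ℝ} (hβ₁ : 0 ≤ β₁) (hβ₂ : 0 ≤ β₂) (t : ℝ) :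
    Tendsto (fun n => charFun (scaledSampleCovLaw n β₁ β₂) t) atTop
      (𝓝 (Real.exp (-(t ^ 2 / 2 * ((1 - isingMag β₁ ^ 2) * (1 - isingMag β₂ ^ 2)))) : ℂ)) := by
  have hsqrt (c : ℝ) : Tendsto (fun n : ℕ => c / √n) atTop (𝓝 0) :=
    (Real.tendsto_sqrt_atTop.comp tendsto_natCast_atTop_atTop).const_div_atTop c
  have hbound : Tendsto (fun n : ℕ =>
      128 * |t| ^ 3 * Real.exp (4 * |t|) / √n + t ^ 2 / 2 * fieldDeviation n β₂
        + t ^ 2 / 2 * (2 / √n + fieldDeviation n β₁)) atTop (𝓝 0) := by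
    simpa using ((hsqrt _).add ((tendsto_fieldDeviation hβ₂).const_mul _)).add
      (((hsqrt 2).add (tendsto_fieldDeviation hβ₁)).const_mul (t ^ 2 / 2))
  refine tendsto_iff_norm_sub_tendsto_zero.2 <| squeeze_zero' (.of_forall fun n => norm_nonneg _)
    ?_ hbound
  filter_upwards [eventually_ne_atTop 0] with n hn
  exact norm_charFun_scaledSampleCovLaw_sub_le hβ₁ hβ₂ t hn

theorem tendstoInDistribution_scaledSampleCovLaw {β₁ β₂ : ℝ} (hβ₁ : 0 ≤ β₁) (hβ₂ : 0 ≤ β₂) :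
    _root_.TendstoInDistribution (fun n => scaledSampleCovLaw n β₁ β₂)
      (gaussianReal 0 (Real.toNNReal ((1 - isingMag β₁ ^ 2) * (1 - isingMag β₂ ^ 2)))) := by
  have hvar : 0 ≤ (1 - isingMag β₁ ^ 2) * (1 - isingMag β₂ ^ 2) :=
    mul_nonneg (sub_nonneg.2 (isingMag_sq_lt_one β₁).le) (sub_nonneg.2 (isingMag_sq_lt_one β₂).le)
  refine tendstoInDistribution_of_tendsto_charFun fun t => ?_
  convert tendsto_charFun_scaledSampleCovLaw hβ₁ hβ₂ t using 2
  rw [charFun_gaussianReal, Real.coe_toNNReal _ hvar]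
  push_cast
  ring_nf

end CentralLimit

/-- **Theorem 2 (Curie–Weiss, sample covariance).** If `X ~ P_{β₁,Q^{CW}}` and
`Y ~ P_{β₂,Q^{CW}}` are independent, then `√n Tₙ →d N(0, (1-m(β₁)²)(1-m(β₂)²))`; the limiting
variance is `1` iff `β₁ ≤ 1` and `β₂ ≤ 1`, and is `< 1` otherwise. -/
theorem curieWeiss_sampleCov_clt (β₁ β₂ : ℝ) (hβ₁ : 0 ≤ β₁) (hβ₂ : 0 ≤ β₂) :
    TendstoInDistribution
      (fun n => Measure.map
        (fun p : (Fin n → ℝ) × (Fin n → ℝ) => Real.sqrt n * sampleCov p.1 p.2)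
        ((isingMeasure (Fin n) β₁ (QCW n)).prod (isingMeasure (Fin n) β₂ (QCW n))))
      (gaussianReal 0 (Real.toNNReal ((1 - isingMag β₁ ^ 2) * (1 - isingMag β₂ ^ 2))))
    ∧ ((1 - isingMag β₁ ^ 2) * (1 - isingMag β₂ ^ 2) = 1 ↔ β₁ ≤ 1 ∧ β₂ ≤ 1)
    ∧ (¬(β₁ ≤ 1 ∧ β₂ ≤ 1) → (1 - isingMag β₁ ^ 2) * (1 - isingMag β₂ ^ 2) < 1) := by
  refine ⟨?_, one_sub_isingMag_sq_mul_eq_one_iff, one_sub_isingMag_sq_mul_lt_one⟩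
  simp only [map_sampleCov_isingMeasure_QCW]
  exact tendstoInDistribution_scaledSampleCovLaw hβ₁ hβ₂

end
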